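/- For all q ≥ 1 and d, N ∈ ℕ satisfying κ_q(d,N) ≤ N^{−11}, the number of points x ∈ B_N^q ∩ ℤ^d such that |{i ∈ [d] : x_i = ±1}| ≤ N^q − 2 is at most N^{−q}·|B_N^q ∩ ℤ^d|. -/

import Mathlib

open Classical in
noncomputable def latticeBall (q : ℝ) (d : ℕ) (t : ℝ) : Finset (Fin d → ℤ) :=
  (Finset.Icc (fun _ => -(⌈t⌉₊ : ℤ)) (fun _ => (⌈t⌉₊ : ℤ))).filter
    (fun x => ∑ i, |(x i : ℝ)| ^ q ≤ t ^ q)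

/-!
Write `M = t ^ q`. A point `x` of the ball with at most `M - 2` entries `±1` leaves room for one
more unit entry: either all its entries lie in `{-1, 0, 1}` and `∑ |x i| ^ q ≤ M - 2`, or some
entry satisfies `|x i| ≥ 2`, and lowering it to `1` decreases the sum by at least `1`. Hence
writing a `1` at any of the at least `d - M` zeros of `x` produces that many points `y` of the ball.
Conversely `y` determines `x` up to the position of the new `1`, the position of the lowered entry
(both among the at most `M` nonzero positions of `y`) and its former value, so each `y` comes
from at most `M ^ 2 * (2 * t + 1)` points `x`. Double counting these pairs, with `d ≥ M ^ 6`, gives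
the bound.
-/

open Finset Function

lemma injOn_update_index {ι α : Type*} [DecidableEq ι] (f : ι → α) (a : α) :
    Set.InjOn (fun j => update f j a) {j | f j ≠ a} := by
  intro j hj k _ hjk
  by_contra hne
  have hval : a = f j := by simpa [update_of_ne hne] using congrFun hjk j
  exact hj hval.symm

section EraseRewrites

variable {ι α : Type*} [Fintype ι] [DecidableEq ι] [Zero α] [DecidableEq α]

/-- The vectors obtained from `y` by erasing a nonzero entry and then writing a value from `V` at a
position where `y` is nonzero. The two positions may coincide. -/
def eraseRewrites (V : Finset α) (y : ι → α) : Finset (ι → α) :=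
  (({i | y i ≠ 0} : Finset ι) ×ˢ ({i | y i ≠ 0} : Finset ι) ×ˢ V).image
    fun p => update (update y p.1 0) p.2.1 p.2.2

lemma card_eraseRewrites_le (V : Finset α) (y : ι → α) :
    #(eraseRewrites V y) ≤ #{i | y i ≠ 0} ^ 2 * #V :=
  card_image_le.trans_eq <| by rw [card_product, card_product, sq, mul_assoc]

lemma mem_eraseRewrites_update {V : Finset α} {x : ι → α} {j : ι} {a : α} (hj : x j = 0)
    (ha : a ≠ 0) (hV : 0 ∈ V) : x ∈ eraseRewrites V (update x j a) := by
  refine mem_image.2 ⟨(j, j, 0), by simp [ha, hV], ?_⟩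
  simp [← hj]

lemma mem_eraseRewrites_update_update {V : Finset α} {x : ι → α} {i j : ι} {a b : α}
    (hj : x j = 0) (hi : x i ≠ 0) (ha : a ≠ 0) (hb : b ≠ 0) (hV : x i ∈ V) :
    x ∈ eraseRewrites V (update (update x i b) j a) := by
  have hij : i ≠ j := fun h => hi (h ▸ hj)
  refine mem_image.2 ⟨(j, i, x i), by simp [hij, ha, hb, hV], ?_⟩
  simp [update_comm hij, ← hj]

end EraseRewrites

section PowSum

variable {ι : Type*} [Fintype ι] {q : ℝ}

/-- The `q`-th power `∑ |x i| ^ q` of the `ℓ^q` norm of an integer vector. -/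
noncomputable def powSum (q : ℝ) (x : ι → ℤ) : ℝ := ∑ i, |(x i : ℝ)| ^ q

lemma powSum_update [DecidableEq ι] (q : ℝ) (x : ι → ℤ) (j : ι) (v : ℤ) :
    powSum q (update x j v) = powSum q x - |(x j : ℝ)| ^ q + |(v : ℝ)| ^ q := by
  have off_j : ∑ i ∈ univ.erase j, |(update x j v i : ℝ)| ^ q
      = ∑ i ∈ univ.erase j, |(x i : ℝ)| ^ q :=
    sum_congr rfl fun i hi => by rw [update_of_ne (ne_of_mem_erase hi)]
  rw [powSum, powSum, ← add_sum_erase _ _ (mem_univ j),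
    ← add_sum_erase _ (fun i => |(x i : ℝ)| ^ q) (mem_univ j), off_j, update_self]
  ring

lemma abs_rpow_le_powSum (q : ℝ) (x : ι → ℤ) (i : ι) : |(x i : ℝ)| ^ q ≤ powSum q x :=
  single_le_sum (f := fun i => |(x i : ℝ)| ^ q) (fun _ _ => by positivity) (mem_univ i)

lemma abs_le_of_powSum_le {t : ℝ} {x : ι → ℤ} (hq : 0 < q) (ht : 0 ≤ t)
    (hx : powSum q x ≤ t ^ q) (i : ι) : |(x i : ℝ)| ≤ t :=
  (Real.rpow_le_rpow_iff (abs_nonneg _) ht hq).1 ((abs_rpow_le_powSum q x i).trans hx)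

lemma card_ne_zero_le_powSum (hq : 0 ≤ q) (x : ι → ℤ) : (#{i | x i ≠ 0} : ℝ) ≤ powSum q x := by
  rw [card_filter, Nat.cast_sum, powSum]
  refine sum_le_sum fun i _ => ?_
  split_ifs with hi
  · exact_mod_cast Real.one_le_rpow (by exact_mod_cast Int.one_le_abs hi) hq
  · rw [Nat.cast_zero]
    positivity

lemma powSum_eq_card_of_abs_le_one (hq : q ≠ 0) {x : ι → ℤ} (hx : ∀ i, |x i| ≤ 1) :
    powSum q x = #{i | x i = 1 ∨ x i = -1} := by
  rw [card_filter, Nat.cast_sum, powSum]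
  refine sum_congr rfl fun i _ => ?_
  have hi : x i = 0 ∨ x i = 1 ∨ x i = -1 := by
    have := abs_le.1 (hx i)
    omega
  rcases hi with h | h | h <;> simp [h, hq]

lemma powSum_update_one_le [DecidableEq ι] (hq : 1 ≤ q) {x : ι → ℤ} {i : ι} (hi : 2 ≤ |x i|) :
    powSum q (update x i 1) ≤ powSum q x - 1 := by
  have two_le : (2 : ℝ) ≤ |(x i : ℝ)| := by exact_mod_cast hi
  have le_rpow : |(x i : ℝ)| ≤ |(x i : ℝ)| ^ q :=
    Real.self_le_rpow_of_one_le (by linarith) hq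
  rw [powSum_update, Int.cast_one, abs_one, Real.one_rpow]
  linarith

lemma exists_powSum_le_sub_one [DecidableEq ι] (hq : 1 ≤ q) {V : Finset ℤ} (hV : 0 ∈ V) {T : ℝ}
    {x : ι → ℤ} (hxV : ∀ i, x i ∈ V) (hxT : powSum q x ≤ T)
    (hunits : (#{i | x i = 1 ∨ x i = -1} : ℝ) ≤ T - 2) :
    ∃ f : ι → ℤ, powSum q f ≤ T - 1 ∧
      ∀ j, x j = 0 → f j = 0 ∧ x ∈ eraseRewrites V (update f j 1) := by
  by_cases hbig : ∃ i, 2 ≤ |x i|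
  · obtain ⟨i, hi⟩ := hbig
    have hi0 : x i ≠ 0 := fun h => by simp [h] at hi
    refine ⟨update x i 1, by linarith [powSum_update_one_le hq hi], fun j hj => ⟨?_, ?_⟩⟩
    · have hji : j ≠ i := fun h => hi0 (h ▸ hj)
      rw [update_of_ne hji, hj]
    · exact mem_eraseRewrites_update_update hj hi0 one_ne_zero one_ne_zero (hxV i)
  · have hsmall : ∀ i, |x i| ≤ 1 := fun i => Int.lt_add_one_iff.1 (not_le.1 (not_exists.1 hbig i))
    have hsum := powSum_eq_card_of_abs_le_one (by linarith : q ≠ 0) hsmall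
    exact ⟨x, by linarith, fun j hj => ⟨hj, mem_eraseRewrites_update hj one_ne_zero hV⟩⟩

end PowSum

section LatticeBall

variable {q t : ℝ} {d : ℕ} {x : Fin d → ℤ}

lemma mem_latticeBall (hq : 0 < q) (ht : 0 ≤ t) :
    x ∈ latticeBall q d t ↔ powSum q x ≤ t ^ q := by
  refine mem_filter.trans (and_iff_right_of_imp fun hx => ?_)
  have abs_le_ceil (i : Fin d) : |x i| ≤ ⌈t⌉₊ := by
    exact_mod_cast (abs_le_of_powSum_le hq ht hx i).trans (Nat.le_ceil t)
  exact mem_Icc.2 ⟨fun i => (abs_le.1 (abs_le_ceil i)).1, fun i => (abs_le.1 (abs_le_ceil i)).2⟩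

lemma apply_mem_Icc_floor_of_mem_latticeBall (hq : 0 < q) (ht : 0 ≤ t)
    (hx : x ∈ latticeBall q d t) (i : Fin d) : x i ∈ Icc (-(⌊t⌋₊ : ℤ)) ⌊t⌋₊ := by
  have abs_le_floor : |x i| ≤ ⌊t⌋₊ := by
    rw [Int.natCast_floor_eq_floor ht]
    exact Int.le_floor.2 (by
      exact_mod_cast abs_le_of_powSum_le hq ht ((mem_latticeBall hq ht).1 hx) i)
  exact mem_Icc.2 (abs_le.1 abs_le_floor)

lemma card_ne_zero_le_floor_of_mem_latticeBall (hq : 0 < q) (ht : 0 ≤ t)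
    (hx : x ∈ latticeBall q d t) : #{i | x i ≠ 0} ≤ ⌊t ^ q⌋₊ :=
  Nat.le_floor <| (card_ne_zero_le_powSum hq.le x).trans ((mem_latticeBall hq ht).1 hx)

lemma sub_floor_le_card_eq_zero_of_mem_latticeBall (hq : 0 < q) (ht : 0 ≤ t)
    (hx : x ∈ latticeBall q d t) : d - ⌊t ^ q⌋₊ ≤ #{i | x i = 0} := by
  have hnonzero := card_ne_zero_le_floor_of_mem_latticeBall hq ht hx
  have hsplit : #{i | x i = 0} + #{i | x i ≠ 0} = d := by
    simpa using card_filter_add_card_filter_not (s := univ) (fun i => x i = 0)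
  omega

/-- The points of the lattice ball with at most `t ^ q - 2` entries equal to `±1`. -/
noncomputable def fewUnitsBall (q : ℝ) (d : ℕ) (t : ℝ) : Finset (Fin d → ℤ) :=
  {x ∈ latticeBall q d t | (#{i | x i = 1 ∨ x i = -1} : ℝ) ≤ t ^ q - 2}

lemma fewUnitsBall_eq_empty (h : t ^ q < 2) : fewUnitsBall q d t = ∅ :=
  filter_false_of_mem fun x _ hunits => by
    have : (0 : ℝ) ≤ #{i | x i = 1 ∨ x i = -1} := Nat.cast_nonneg _
    linarith

lemma sub_floor_le_card_mem_eraseRewrites (hq : 1 ≤ q) (ht : 0 ≤ t)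
    (hx : x ∈ fewUnitsBall q d t) :
    d - ⌊t ^ q⌋₊ ≤
      #{y ∈ latticeBall q d t | x ∈ eraseRewrites (Icc (-(⌊t⌋₊ : ℤ)) ⌊t⌋₊) y} := by
  have hq0 : 0 < q := by linarith
  obtain ⟨hxB, hunits⟩ := mem_filter.1 hx
  obtain ⟨f, hf, hfx⟩ := exists_powSum_le_sub_one hq (mem_Icc.2 (by simp))
    (apply_mem_Icc_floor_of_mem_latticeBall hq0 ht hxB) ((mem_latticeBall hq0 ht).1 hxB) hunits
  refine (sub_floor_le_card_eq_zero_of_mem_latticeBall hq0 ht hxB).trans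
    (card_le_card_of_injOn (fun j => update f j 1) (fun j hj => ?_) ?_)
  · obtain ⟨hfj, hmem⟩ := hfx j (by simpa using hj)
    have hball : powSum q (update f j 1) ≤ t ^ q := by
      rw [powSum_update, hfj]
      simp only [Int.cast_zero, abs_zero, Real.zero_rpow hq0.ne', Int.cast_one, abs_one,
        Real.one_rpow]
      linarith
    exact mem_filter.2 ⟨(mem_latticeBall hq0 ht).2 hball, hmem⟩
  · exact (injOn_update_index f 1).mono fun j hj => by
      simp [(hfx j (by simpa using hj)).1]

lemma card_fewUnitsBall_mul_le (hq : 1 ≤ q) (ht : 0 ≤ t) :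
    #(fewUnitsBall q d t) * (d - ⌊t ^ q⌋₊) ≤
      #(latticeBall q d t) * (⌊t ^ q⌋₊ ^ 2 * (2 * ⌊t⌋₊ + 1)) := by
  have card_values : #(Icc (-(⌊t⌋₊ : ℤ)) ⌊t⌋₊) = 2 * ⌊t⌋₊ + 1 := by
    rw [Int.card_Icc]
    omega
  refine card_mul_le_card_mul (fun x y => x ∈ eraseRewrites (Icc (-(⌊t⌋₊ : ℤ)) ⌊t⌋₊) y)
    (fun x hx => sub_floor_le_card_mem_eraseRewrites hq ht hx) fun y hy => ?_
  calc #(bipartiteBelow (fun x y => x ∈ eraseRewrites (Icc (-(⌊t⌋₊ : ℤ)) ⌊t⌋₊) y)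
          (fewUnitsBall q d t) y)
      ≤ #(eraseRewrites (Icc (-(⌊t⌋₊ : ℤ)) ⌊t⌋₊) y) :=
        card_le_card fun x hx => (mem_filter.1 hx).2
    _ ≤ #{i | y i ≠ 0} ^ 2 * #(Icc (-(⌊t⌋₊ : ℤ)) ⌊t⌋₊) := card_eraseRewrites_le _ _
    _ ≤ ⌊t ^ q⌋₊ ^ 2 * (2 * ⌊t⌋₊ + 1) := by
        rw [card_values]
        gcongr
        exact card_ne_zero_le_floor_of_mem_latticeBall (by linarith) ht hy

lemma card_fewUnitsBall_mul_sub_le (hq : 1 ≤ q) (ht : 1 ≤ t) :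
    (#(fewUnitsBall q d t) : ℝ) * (d - t ^ q) ≤
      #(latticeBall q d t) * ((t ^ q) ^ 2 * (2 * t ^ q + 1)) := by
  have ht0 : 0 ≤ t := by linarith
  have floor_rpow_le : (⌊t ^ q⌋₊ : ℝ) ≤ t ^ q := Nat.floor_le (by positivity)
  have floor_le : (⌊t⌋₊ : ℝ) ≤ t ^ q :=
    (Nat.floor_le ht0).trans (Real.self_le_rpow_of_one_le ht hq)
  have le_natSub : (d : ℝ) - t ^ q ≤ (d - ⌊t ^ q⌋₊ : ℕ) := by
    have : (d : ℝ) ≤ (d - ⌊t ^ q⌋₊ : ℕ) + ⌊t ^ q⌋₊ := by exact_mod_cast le_tsub_add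
    linarith
  calc (#(fewUnitsBall q d t) : ℝ) * (d - t ^ q)
      ≤ #(fewUnitsBall q d t) * (d - ⌊t ^ q⌋₊ : ℕ) := by gcongr
    _ ≤ #(latticeBall q d t) * (⌊t ^ q⌋₊ ^ 2 * (2 * ⌊t⌋₊ + 1)) := by
        exact_mod_cast card_fewUnitsBall_mul_le hq ht0
    _ ≤ #(latticeBall q d t) * ((t ^ q) ^ 2 * (2 * t ^ q + 1)) := by gcongr

end LatticeBall

lemma rpow_le_of_div_rpow_le {q t D a : ℝ} (hq : 0 < q) (ht : 0 < t) (hD : 0 < D)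
    (h : t / D ^ (1 / q) ≤ t ^ (-a)) : t ^ (q * (a + 1)) ≤ D := by
  have hroot : t ^ (a + 1) ≤ D ^ q⁻¹ := by
    rw [one_div, div_le_iff₀ (by positivity), Real.rpow_neg ht.le, inv_mul_eq_div,
      le_div_iff₀ (by positivity)] at h
    rwa [Real.rpow_add_one ht.ne', mul_comm]
  rw [mul_comm, Real.rpow_mul ht.le]
  exact (Real.le_rpow_inv_iff_of_pos (by positivity) hD.le hq).1 hroot

lemma mul_le_of_mul_sub_le {M D a b : ℝ} (hM : 2 ≤ M) (hD : M ^ 6 ≤ D) (ha : 0 ≤ a)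
    (h : a * (D - M) ≤ b * (M ^ 2 * (2 * M + 1))) : a * M ≤ b := by
  have hpoly : M * (M ^ 2 * (2 * M + 1)) ≤ D - M := by
    have cube_le : M ^ 3 ≤ M ^ 4 := pow_le_pow_right₀ (by linarith) (by norm_num)
    have self_le : M ≤ M ^ 4 := le_self_pow₀ (by linarith) (by norm_num)
    have four_mul_le : 2 ^ 2 * M ^ 4 ≤ M ^ 2 * M ^ 4 := by gcongr
    linarith
  refine le_of_mul_le_mul_right ?_ (by positivity : 0 < M ^ 2 * (2 * M + 1))
  calc a * M * (M ^ 2 * (2 * M + 1)) = a * (M * (M ^ 2 * (2 * M + 1))) := by ring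
    _ ≤ a * (D - M) := by gcongr
    _ ≤ b * (M ^ 2 * (2 * M + 1)) := h

open Classical in
theorem stmt6_general (q : ℝ) (hq : 1 ≤ q) (d : ℕ) (t : ℝ) (hd : 0 < d) (ht : 0 < t)
    (hκ : t / (d : ℝ) ^ (1 / q) ≤ t ^ (-(5 : ℝ))) :
    (((latticeBall q d t).filter (fun x =>
        ((Finset.univ.filter (fun i => x i = 1 ∨ x i = -1)).card : ℝ) ≤ t ^ q - 2)).card : ℝ)
      ≤ t ^ (-q) * ((latticeBall q d t).card : ℝ) := by
  change (#(fewUnitsBall q d t) : ℝ) ≤ _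
  have hq0 : 0 < q := by linarith
  rcases lt_or_ge (t ^ q) 2 with hsmall | hlarge
  · rw [fewUnitsBall_eq_empty hsmall, card_empty, Nat.cast_zero]
    positivity
  · have one_le : 1 ≤ t := (Real.rpow_le_rpow_iff zero_le_one ht.le hq0).1 <| by
      rw [Real.one_rpow]
      linarith
    have pow_six_le : (t ^ q) ^ 6 ≤ (d : ℝ) := by
      rw [← Real.rpow_mul_natCast ht.le]
      convert rpow_le_of_div_rpow_le hq0 ht (by exact_mod_cast hd) hκ using 3
      norm_num
    rw [Real.rpow_neg ht.le, inv_mul_eq_div, le_div_iff₀ (by positivity)]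
    exact mul_le_of_mul_sub_le hlarge pow_six_le (Nat.cast_nonneg _)
      (card_fewUnitsBall_mul_sub_le hq one_le)

open Classical in
theorem stmt6 (q : ℝ) (hq : 1 ≤ q) (d N : ℕ) (hd : 0 < d) (hN : 0 < N)
    (hκ : (N : ℝ) / (d : ℝ) ^ (1 / q) ≤ (N : ℝ) ^ (-(11 : ℝ))) :
    (((latticeBall q d N).filter (fun x =>
        ((Finset.univ.filter (fun i => x i = 1 ∨ x i = -1)).card : ℝ)
          ≤ (N : ℝ) ^ q - 2)).card : ℝ)
      ≤ (N : ℝ) ^ (-q) * ((latticeBall q d N).card : ℝ) :=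
  stmt6_general q hq d N hd (by exact_mod_cast hN) <| hκ.trans <|
    Real.rpow_le_rpow_of_exponent_le (by exact_mod_cast hN) (by norm_num)
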